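/- arXiv:2306.15257 — 4 statements merged into one kernel-verified Lean document; each statement's English description precedes it below -/
import Mathlib

section
/- Let (Ω, 𝒜, μ) be a measure space, E a real normed vector space, and Φ : [0,∞) → [0,∞) a Young function (Φ is convex, nondecreasing, continuous, Φ(0) = 0, and Φ(t) > 0 for t > 0) satisfying the Δ₂-condition: there is a constant c > 0 with Φ(2t) ≤ c·Φ(t) for all t ≥ 0. Suppose (u_n) is a sequence of strongly measurable functions u_n : Ω → E and u : Ω → E is strongly measurable, such that u_n(x) → u(x) for μ-almost every x ∈ Ω, ∫_Ω Φ(‖u‖) dμ < ∞, and ∫_Ω Φ(‖u_n‖) dμ → ∫_Ω Φ(‖u‖) dμ as n → ∞. Then ∫_Ω Φ(‖u_n − u‖) dμ → 0 as n → ∞. -/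
open MeasureTheory Filter Topology ENNReal

/-!
The Δ₂-condition gives the pointwise bound `Φ ‖uₙ - u₀‖ ≤ c (Φ ‖uₙ‖ + Φ ‖u₀‖)`. The right-hand side
depends on `n`, but it converges almost everywhere and, by hypothesis, so do its integrals. Pratt's
extension of dominated convergence therefore applies; it follows from Fatou's lemma for the
dominated functions `fₙ` and for the differences `gₙ - fₙ` with the dominating ones.
-/

theorem limsup_add_liminf_le_limsup_add {ι : Type*} {L : Filter ι} [L.NeBot] (a b : ι → ℝ≥0∞) :
    limsup a L + liminf b L ≤ limsup (fun i => a i + b i) L := by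
  rw [L.liminf_eq_iSup_iInf, add_biSup' ⟨_, univ_mem⟩]
  refine iSup₂_le fun s hs => ?_
  calc limsup a L + ⨅ i ∈ s, b i = limsup (fun i => a i + ⨅ j ∈ s, b j) L :=
        (limsup_add_const L a _ (by isBoundedDefault) (by isBoundedDefault)).symm
    _ ≤ limsup (fun i => a i + b i) L := limsup_le_limsup <| by
        filter_upwards [hs] with i hi
        gcongr
        exact iInf₂_le i hi

theorem tendsto_of_tendsto_add_of_le_liminf {ι : Type*} {L : Filter ι} {a b : ι → ℝ≥0∞}
    {l s : ℝ≥0∞} (hs : s ≠ ∞) (hab : Tendsto (fun i => a i + b i) L (𝓝 s))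
    (ha : l ≤ liminf a L) (hb : s ≤ l + liminf b L) : Tendsto a L (𝓝 l) := by
  rcases L.eq_or_neBot with rfl | _
  · exact tendsto_bot
  have hsum : limsup a L + liminf b L ≤ s :=
    (limsup_add_liminf_le_limsup_add a b).trans_eq hab.limsup_eq
  have hb_ne_top : liminf b L ≠ ∞ := ne_top_of_le_ne_top hs (le_add_self.trans hsum)
  exact tendsto_of_le_liminf_of_limsup_le ha
    ((ENNReal.add_le_add_iff_right hb_ne_top).1 (hsum.trans hb))

section Lintegral

variable {Ω : Type*} [MeasurableSpace Ω] {μ : Measure Ω}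
  {ι : Type*} {L : Filter ι} [L.IsCountablyGenerated]

theorem lintegral_le_liminf_of_ae_tendsto [L.NeBot] {f : ι → Ω → ℝ≥0∞} {f₀ : Ω → ℝ≥0∞}
    (hf : ∀ i, AEMeasurable (f i) μ)
    (hf_lim : ∀ᵐ x ∂μ, Tendsto (fun i => f i x) L (𝓝 (f₀ x))) :
    ∫⁻ x, f₀ x ∂μ ≤ liminf (fun i => ∫⁻ x, f i x ∂μ) L :=
  calc ∫⁻ x, f₀ x ∂μ = ∫⁻ x, liminf (fun i => f i x) L ∂μ :=
        lintegral_congr_ae (hf_lim.mono fun _ hx => hx.liminf_eq.symm)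
    _ ≤ liminf (fun i => ∫⁻ x, f i x ∂μ) L := lintegral_liminf_le' hf

theorem tendsto_lintegral_of_ae_le_of_tendsto_lintegral {f g : ι → Ω → ℝ≥0∞} {f₀ g₀ : Ω → ℝ≥0∞}
    (hf : ∀ i, AEMeasurable (f i) μ) (hg : ∀ i, AEMeasurable (g i) μ)
    (hfg : ∀ i, f i ≤ᵐ[μ] g i)
    (hf_lim : ∀ᵐ x ∂μ, Tendsto (fun i => f i x) L (𝓝 (f₀ x)))
    (hg_lim : ∀ᵐ x ∂μ, Tendsto (fun i => g i x) L (𝓝 (g₀ x)))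
    (hg₀ : ∫⁻ x, g₀ x ∂μ ≠ ∞)
    (hg_int : Tendsto (fun i => ∫⁻ x, g i x ∂μ) L (𝓝 (∫⁻ x, g₀ x ∂μ))) :
    Tendsto (fun i => ∫⁻ x, f i x ∂μ) L (𝓝 (∫⁻ x, f₀ x ∂μ)) := by
  rcases L.eq_or_neBot with rfl | _
  · exact tendsto_bot
  have hf₀_meas : AEMeasurable f₀ μ := aemeasurable_of_tendsto_metrizable_ae L hf hf_lim
  have hg₀_meas : AEMeasurable g₀ μ := aemeasurable_of_tendsto_metrizable_ae L hg hg_lim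
  have hsplit (i : ι) : ∫⁻ x, f i x ∂μ + ∫⁻ x, (g i x - f i x) ∂μ = ∫⁻ x, g i x ∂μ := by
    rw [← lintegral_add_left' (hf i)]
    exact lintegral_congr_ae ((hfg i).mono fun x hx => add_tsub_cancel_of_le hx)
  have hsub_lim : ∀ᵐ x ∂μ, Tendsto (fun i => g i x - f i x) L (𝓝 (g₀ x - f₀ x)) := by
    filter_upwards [hf_lim, hg_lim, ae_lt_top' hg₀_meas hg₀] with x hfx hgx hx
    exact ENNReal.Tendsto.sub hgx hfx (.inl hx.ne)
  refine tendsto_of_tendsto_add_of_le_liminf hg₀ (hg_int.congr fun i => (hsplit i).symm)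
    (lintegral_le_liminf_of_ae_tendsto hf hf_lim) ?_
  calc ∫⁻ x, g₀ x ∂μ ≤ ∫⁻ x, (f₀ x + (g₀ x - f₀ x)) ∂μ := lintegral_mono fun _ => le_add_tsub
    _ = ∫⁻ x, f₀ x ∂μ + ∫⁻ x, (g₀ x - f₀ x) ∂μ := lintegral_add_left' hf₀_meas _
    _ ≤ ∫⁻ x, f₀ x ∂μ + liminf (fun i => ∫⁻ x, (g i x - f i x) ∂μ) L := by
        gcongr
        exact lintegral_le_liminf_of_ae_tendsto (fun i => (hg i).sub (hf i)) hsub_lim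

theorem tendsto_lintegral_comp_sub_zero_of_tendsto_lintegral_comp {E : Type*}
    [TopologicalSpace E] [AddGroup E] [IsTopologicalAddGroup E]
    {φ : E → ℝ≥0∞} {C : ℝ≥0∞} (hφ : Continuous φ) (hφ0 : φ 0 = 0) (hC : C ≠ ∞)
    (hφ_sub : ∀ v w, φ (v - w) ≤ C * (φ v + φ w)) {u : ι → Ω → E} {u₀ : Ω → E}
    (hu : ∀ i, AEStronglyMeasurable (u i) μ) (hu₀ : AEStronglyMeasurable u₀ μ)
    (hu_lim : ∀ᵐ x ∂μ, Tendsto (fun i => u i x) L (𝓝 (u₀ x)))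
    (hfin : ∫⁻ x, φ (u₀ x) ∂μ ≠ ∞)
    (hint : Tendsto (fun i => ∫⁻ x, φ (u i x) ∂μ) L (𝓝 (∫⁻ x, φ (u₀ x) ∂μ))) :
    Tendsto (fun i => ∫⁻ x, φ (u i x - u₀ x) ∂μ) L (𝓝 0) := by
  have hφ_meas {w : Ω → E} (hw : AEStronglyMeasurable w μ) : AEMeasurable (fun x => φ (w x)) μ :=
    (hφ.comp_aestronglyMeasurable hw).aemeasurable
  have lintegral_bound {w : Ω → E} (hw : AEStronglyMeasurable w μ) :
      ∫⁻ x, C * (φ (w x) + φ (u₀ x)) ∂μ = C * (∫⁻ x, φ (w x) ∂μ + ∫⁻ x, φ (u₀ x) ∂μ) := by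
    rw [lintegral_const_mul' _ _ hC, lintegral_add_left' (hφ_meas hw)]
  have hbound_lim : Tendsto (fun i => ∫⁻ x, C * (φ (u i x) + φ (u₀ x)) ∂μ) L
      (𝓝 (∫⁻ x, C * (φ (u₀ x) + φ (u₀ x)) ∂μ)) := by
    simp only [lintegral_bound hu₀, lintegral_bound (hu _)]
    exact ENNReal.Tendsto.const_mul (hint.add_const _) (.inr hC)
  rw [← lintegral_zero (μ := μ)]
  refine tendsto_lintegral_of_ae_le_of_tendsto_lintegral (fun i => hφ_meas ((hu i).sub hu₀))
    (fun i => ((hφ_meas (hu i)).add (hφ_meas hu₀)).const_mul C)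
    (fun i => ae_of_all μ fun x => hφ_sub (u i x) (u₀ x)) ?_ ?_ ?_ hbound_lim
  · filter_upwards [hu_lim] with x hx
    have hsub : Tendsto (fun i => u i x - u₀ x) L (𝓝 0) := by
      simpa only [sub_self] using hx.sub_const (u₀ x)
    simpa only [hφ0, Function.comp_def] using (hφ.tendsto 0).comp hsub
  · filter_upwards [hu_lim] with x hx
    exact ENNReal.Tendsto.const_mul (((hφ.tendsto _).comp hx).add_const _) (.inr hC)
  · rw [lintegral_bound hu₀]
    exact mul_ne_top hC (add_ne_top.2 ⟨hfin, hfin⟩)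

end Lintegral

theorem apply_add_le_of_apply_two_mul_le {ψ : ℝ → ℝ≥0∞} {C : ℝ≥0∞}
    (hψ_mono : MonotoneOn ψ (Set.Ici 0)) (hψ_two_mul : ∀ t, 0 ≤ t → ψ (2 * t) ≤ C * ψ t)
    {s t : ℝ} (hs : 0 ≤ s) (ht : 0 ≤ t) : ψ (s + t) ≤ C * (ψ s + ψ t) := by
  wlog hst : s ≤ t generalizing s t
  · simpa only [add_comm] using this ht hs (le_of_not_ge hst)
  calc ψ (s + t) ≤ ψ (2 * t) :=
        hψ_mono (add_nonneg hs ht) (mul_nonneg zero_le_two ht) (by linarith)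
    _ ≤ C * ψ t := hψ_two_mul t ht
    _ ≤ C * (ψ s + ψ t) := by gcongr; exact le_add_self

theorem stmt0_general {Ω : Type*} [MeasurableSpace Ω] {μ : Measure Ω}
    {ι : Type*} {L : Filter ι} [L.IsCountablyGenerated]
    {E : Type*} [SeminormedAddCommGroup E] {Φ : ℝ → ℝ}
    (hΦ_mono : MonotoneOn Φ (Set.Ici 0)) (hΦ_cont : ContinuousOn Φ (Set.Ici 0)) (hΦ0 : Φ 0 = 0)
    (hΔ2 : ∃ c, ∀ t, 0 ≤ t → Φ (2 * t) ≤ c * Φ t)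
    {u : ι → Ω → E} {u₀ : Ω → E}
    (hu : ∀ i, AEStronglyMeasurable (u i) μ) (hu₀ : AEStronglyMeasurable u₀ μ)
    (hconv : ∀ᵐ x ∂μ, Tendsto (fun i => u i x) L (𝓝 (u₀ x)))
    (hfin : ∫⁻ x, ENNReal.ofReal (Φ ‖u₀ x‖) ∂μ ≠ ∞)
    (hint : Tendsto (fun i => ∫⁻ x, ENNReal.ofReal (Φ ‖u i x‖) ∂μ) L
      (𝓝 (∫⁻ x, ENNReal.ofReal (Φ ‖u₀ x‖) ∂μ))) :
    Tendsto (fun i => ∫⁻ x, ENNReal.ofReal (Φ ‖u i x - u₀ x‖) ∂μ) L (𝓝 0) := by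
  obtain ⟨c, hc⟩ := hΔ2
  let ψ : ℝ → ℝ≥0∞ := fun t => ENNReal.ofReal (Φ t)
  have hψ_mono : MonotoneOn ψ (Set.Ici 0) := ofReal_mono.comp_monotoneOn hΦ_mono
  have hψ_two_mul (t : ℝ) (ht : 0 ≤ t) : ψ (2 * t) ≤ ENNReal.ofReal c * ψ t := by
    have hΦ_nonneg : 0 ≤ Φ t := hΦ0.ge.trans (hΦ_mono Set.self_mem_Ici ht ht)
    exact (ofReal_le_ofReal (hc t ht)).trans_eq (ofReal_mul' hΦ_nonneg)
  have hψ_norm_cont : Continuous fun v : E => ψ ‖v‖ :=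
    continuous_ofReal.comp (hΦ_cont.comp_continuous continuous_norm norm_nonneg)
  have hψ_norm_sub (v w : E) : ψ ‖v - w‖ ≤ ENNReal.ofReal c * (ψ ‖v‖ + ψ ‖w‖) :=
    calc ψ ‖v - w‖ ≤ ψ (‖v‖ + ‖w‖) :=
          hψ_mono (norm_nonneg _) (add_nonneg (norm_nonneg v) (norm_nonneg w)) (norm_sub_le v w)
      _ ≤ ENNReal.ofReal c * (ψ ‖v‖ + ψ ‖w‖) :=
          apply_add_le_of_apply_two_mul_le hψ_mono hψ_two_mul (norm_nonneg v) (norm_nonneg w)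
  exact tendsto_lintegral_comp_sub_zero_of_tendsto_lintegral_comp hψ_norm_cont (by simp [ψ, hΦ0])
    ofReal_ne_top hψ_norm_sub hu hu₀ hconv hfin hint

/-- Riesz-type convergence lemma for Young functions satisfying the Δ₂-condition
(measure-theoretic content of Lemma 2.6 of the paper). -/
theorem stmt0 {Ω : Type*} [MeasurableSpace Ω] (μ : Measure Ω)
    {E : Type*} [NormedAddCommGroup E] [NormedSpace ℝ E]
    (Φ : ℝ → ℝ)
    (hΦ_conv : ConvexOn ℝ (Set.Ici (0 : ℝ)) Φ)
    (hΦ_mono : MonotoneOn Φ (Set.Ici (0 : ℝ)))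
    (hΦ_cont : ContinuousOn Φ (Set.Ici (0 : ℝ)))
    (hΦ0 : Φ 0 = 0)
    (hΦ_pos : ∀ t : ℝ, 0 < t → 0 < Φ t)
    (hΔ2 : ∃ c : ℝ, 0 < c ∧ ∀ t : ℝ, 0 ≤ t → Φ (2 * t) ≤ c * Φ t)
    (u : ℕ → Ω → E) (u₀ : Ω → E)
    (hu : ∀ n, StronglyMeasurable (u n)) (hu₀ : StronglyMeasurable u₀)
    (hconv : ∀ᵐ x ∂μ, Tendsto (fun n => u n x) atTop (𝓝 (u₀ x)))
    (hfin : ∫⁻ x, ENNReal.ofReal (Φ ‖u₀ x‖) ∂μ ≠ ∞)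
    (hint : Tendsto (fun n => ∫⁻ x, ENNReal.ofReal (Φ ‖u n x‖) ∂μ) atTop
      (𝓝 (∫⁻ x, ENNReal.ofReal (Φ ‖u₀ x‖) ∂μ))) :
    Tendsto (fun n => ∫⁻ x, ENNReal.ofReal (Φ ‖u n x - u₀ x‖) ∂μ) atTop (𝓝 0) := by
  obtain ⟨c, -, hc⟩ := hΔ2
  exact stmt0_general hΦ_mono hΦ_cont hΦ0 ⟨c, hc⟩ (fun n => (hu n).aestronglyMeasurable)
    hu₀.aestronglyMeasurable hconv hfin hint
end

section
/- Let (Ω, 𝒜, μ) be a measure space, E a real inner product space, and p > 1 a real number. For v ∈ E write |v|^{p-2}v := ‖v‖^{p-2}v, with the convention |v|^{p-2}v = 0 when v = 0. Suppose (u_n) is a sequence of strongly measurable functions u_n : Ω → E and u : Ω → E is strongly measurable, such that u_n(x) → u(x) for μ-almost every x ∈ Ω, ∫_Ω ‖u‖^p dμ < ∞, and ∫_Ω ‖u_n‖^p dμ → ∫_Ω ‖u‖^p dμ. Then |u_n|^{p-2}u_n converges to |u|^{p-2}u in L^{p/(p-1)}(Ω, μ; E), i.e. ∫_Ω ‖ |u_n|^{p-2}u_n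 − |u|^{p-2}u ‖^{p/(p-1)} dμ → 0 as n → ∞. -/
open MeasureTheory Filter Topology ENNReal Real

/-!
Write `J v = ‖v‖ ^ (p - 2) • v` and let `q = p / (p - 1)` be the conjugate exponent. Since
`‖J v‖ ^ q = ‖v‖ ^ p` and `J` is continuous, the hypotheses on `uₙ` and `p` are the same hypotheses
on `J ∘ uₙ` and `q`, and the claim becomes the theorem of F. Riesz: almost everywhere convergence
together with convergence of the `q`-th moments to a finite limit implies convergence in `L^q`.
That theorem is dominated convergence with the varying bounds `C * (‖vₙ‖ ^ q + ‖v‖ ^ q)`, which is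
Fatou's lemma applied both to the integrands and to the gap between them and their bounds.
-/

theorem tendsto_left_of_tendsto_add_of_le_liminf {ι : Type*} {l : Filter ι} {a b : ℝ≥0∞}
    {A B : ι → ℝ≥0∞} (hb : b ≠ ∞) (hA : a ≤ liminf A l) (hB : b ≤ liminf B l)
    (hAB : Tendsto (fun i => A i + B i) l (𝓝 (a + b))) : Tendsto A l (𝓝 a) := by
  -- Truncating `B` at `b` turns its lower bound into convergence, so that it can be subtracted.
  have h_min : Tendsto (fun i => min (B i) b) l (𝓝 b) := by
    refine tendsto_order.2 ⟨fun c hc => ?_, fun c hc => ?_⟩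
    · filter_upwards [eventually_lt_of_lt_liminf (hc.trans_le hB)] with i hi
      exact lt_min hi hc
    · exact .of_forall fun i => (min_le_right _ _).trans_lt hc
  have h_upper : Tendsto (fun i => A i + B i - min (B i) b) l (𝓝 a) := by
    simpa only [ENNReal.add_sub_cancel_right hb] using ENNReal.Tendsto.sub hAB h_min (Or.inr hb)
  have h_le (i : ι) : A i ≤ A i + B i - min (B i) b :=
    ENNReal.le_sub_of_add_le_right (ne_top_of_le_ne_top hb (min_le_right _ _))
      (add_le_add_right (min_le_left _ _) _)
  rcases l.eq_or_neBot with rfl | _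
  · exact tendsto_bot
  exact tendsto_of_le_liminf_of_limsup_le hA
    ((limsup_le_limsup (.of_forall h_le)).trans h_upper.limsup_eq.le)

theorem lintegral_add_lintegral_tsub {Ω : Type*} [MeasurableSpace Ω] {μ : Measure Ω}
    {f g : Ω → ℝ≥0∞} (hf : AEMeasurable f μ) (hfg : f ≤ᵐ[μ] g) :
    ∫⁻ x, f x ∂μ + ∫⁻ x, (g x - f x) ∂μ = ∫⁻ x, g x ∂μ := by
  rw [← lintegral_add_left' hf]
  exact lintegral_congr_ae (hfg.mono fun _ h => add_tsub_cancel_of_le h)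

section Lintegral

variable {Ω ι : Type*} [MeasurableSpace Ω] {μ : Measure Ω} {l : Filter ι} [l.IsCountablyGenerated]

theorem lintegral_le_liminf_of_tendsto_ae {F : ι → Ω → ℝ≥0∞} {f : Ω → ℝ≥0∞}
    (hF : ∀ i, AEMeasurable (F i) μ)
    (hF_lim : ∀ᵐ x ∂μ, Tendsto (fun i => F i x) l (𝓝 (f x))) :
    ∫⁻ x, f x ∂μ ≤ liminf (fun i => ∫⁻ x, F i x ∂μ) l := by
  rcases l.eq_or_neBot with rfl | _
  · simp
  calc ∫⁻ x, f x ∂μ = ∫⁻ x, liminf (fun i => F i x) l ∂μ :=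
        lintegral_congr_ae (hF_lim.mono fun _ h => h.liminf_eq.symm)
    _ ≤ liminf (fun i => ∫⁻ x, F i x ∂μ) l := lintegral_liminf_le' hF

theorem tendsto_lintegral_of_le_of_tendsto_lintegral {F G : ι → Ω → ℝ≥0∞} {f g : Ω → ℝ≥0∞}
    (hF : ∀ i, AEMeasurable (F i) μ) (hG : ∀ i, AEMeasurable (G i) μ)
    (hFG : ∀ i, F i ≤ᵐ[μ] G i)
    (hF_lim : ∀ᵐ x ∂μ, Tendsto (fun i => F i x) l (𝓝 (f x)))
    (hG_lim : ∀ᵐ x ∂μ, Tendsto (fun i => G i x) l (𝓝 (g x)))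
    (hg : ∫⁻ x, g x ∂μ ≠ ∞)
    (hG_int : Tendsto (fun i => ∫⁻ x, G i x ∂μ) l (𝓝 (∫⁻ x, g x ∂μ))) :
    Tendsto (fun i => ∫⁻ x, F i x ∂μ) l (𝓝 (∫⁻ x, f x ∂μ)) := by
  rcases l.eq_or_neBot with rfl | _
  · exact tendsto_bot
  have hf_meas : AEMeasurable f μ := aemeasurable_of_tendsto_metrizable_ae l hF hF_lim
  have hg_meas : AEMeasurable g μ := aemeasurable_of_tendsto_metrizable_ae l hG hG_lim
  have hfg : f ≤ᵐ[μ] g := by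
    obtain ⟨s, hs⟩ := l.exists_seq_tendsto
    filter_upwards [ae_all_iff.2 fun n => hFG (s n), hF_lim, hG_lim] with x hle hFx hGx
    exact le_of_tendsto_of_tendsto' (hFx.comp hs) (hGx.comp hs) hle
  have h_gap_lim : ∀ᵐ x ∂μ, Tendsto (fun i => G i x - F i x) l (𝓝 (g x - f x)) := by
    filter_upwards [hF_lim, hG_lim, ae_lt_top' hg_meas hg] with x hFx hGx hgx
    exact ENNReal.Tendsto.sub hGx hFx (Or.inl hgx.ne)
  refine tendsto_left_of_tendsto_add_of_le_liminf
    (ne_top_of_le_ne_top hg (lintegral_mono fun x => tsub_le_self))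
    (lintegral_le_liminf_of_tendsto_ae hF hF_lim)
    (lintegral_le_liminf_of_tendsto_ae (fun i => (hG i).sub (hF i)) h_gap_lim) ?_
  simpa only [Pi.sub_apply, lintegral_add_lintegral_tsub hf_meas hfg,
    fun i => lintegral_add_lintegral_tsub (hF i) (hFG i)] using hG_int

theorem tendsto_lintegral_enorm_sub_rpow {E : Type*} [SeminormedAddCommGroup E]
    {v : ι → Ω → E} {v₀ : Ω → E} {q : ℝ} (hq : 0 < q)
    (hv : ∀ i, AEStronglyMeasurable (v i) μ)
    (hv_lim : ∀ᵐ x ∂μ, Tendsto (fun i => v i x) l (𝓝 (v₀ x)))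
    (hv₀ : ∫⁻ x, ‖v₀ x‖ₑ ^ q ∂μ ≠ ∞)
    (hv_int : Tendsto (fun i => ∫⁻ x, ‖v i x‖ₑ ^ q ∂μ) l (𝓝 (∫⁻ x, ‖v₀ x‖ₑ ^ q ∂μ))) :
    Tendsto (fun i => ∫⁻ x, ‖v i x - v₀ x‖ₑ ^ q ∂μ) l (𝓝 0) := by
  rcases l.eq_or_neBot with rfl | _
  · exact tendsto_bot
  have hv₀_meas : AEStronglyMeasurable v₀ μ := aestronglyMeasurable_of_tendsto_ae l hv hv_lim
  have hpow_meas : AEMeasurable (fun x => ‖v₀ x‖ₑ ^ q) μ := hv₀_meas.enorm.pow_const q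
  set C : ℝ≥0∞ := LpAddConst (ENNReal.ofReal q)⁻¹
  have hC : C ≠ ∞ := (LpAddConst_lt_top _).ne
  have h_bound (i : ι) (x : Ω) :
      ‖v i x - v₀ x‖ₑ ^ q ≤ C * (‖v i x‖ₑ ^ q + ‖v₀ x‖ₑ ^ q) :=
    (ENNReal.rpow_le_rpow enorm_sub_le hq.le).trans
      (ENNReal.rpow_add_le_mul_rpow_add_rpow' _ _ hq.le)
  have h_lim : ∀ᵐ x ∂μ, Tendsto (fun i => ‖v i x - v₀ x‖ₑ ^ q) l (𝓝 0) := by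
    filter_upwards [hv_lim] with x hx
    simpa only [sub_self, enorm_eq_nnnorm, nnnorm_zero, ENNReal.coe_zero,
      ENNReal.zero_rpow_of_pos hq] using (hx.sub_const (v₀ x)).enorm.ennrpow_const q
  have h_bound_lim : ∀ᵐ x ∂μ, Tendsto (fun i => C * (‖v i x‖ₑ ^ q + ‖v₀ x‖ₑ ^ q)) l
      (𝓝 (C * (‖v₀ x‖ₑ ^ q + ‖v₀ x‖ₑ ^ q))) := by
    filter_upwards [hv_lim] with x hx
    exact ENNReal.Tendsto.const_mul ((hx.enorm.ennrpow_const q).add_const _) (Or.inr hC)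
  have h_bound_int (w : Ω → E) : ∫⁻ x, C * (‖w x‖ₑ ^ q + ‖v₀ x‖ₑ ^ q) ∂μ =
      C * (∫⁻ x, ‖w x‖ₑ ^ q ∂μ + ∫⁻ x, ‖v₀ x‖ₑ ^ q ∂μ) := by
    rw [lintegral_const_mul' _ _ hC, lintegral_add_right' (fun x => ‖w x‖ₑ ^ q) hpow_meas]
  rw [← lintegral_zero (μ := μ)]
  refine tendsto_lintegral_of_le_of_tendsto_lintegral
    (G := fun i x => C * (‖v i x‖ₑ ^ q + ‖v₀ x‖ₑ ^ q))
    (fun i => ((hv i).sub hv₀_meas).enorm.pow_const q)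
    (fun i => (((hv i).enorm.pow_const q).add hpow_meas).const_mul C)
    (fun i => ae_of_all μ (h_bound i)) h_lim h_bound_lim ?_ ?_
  · rw [h_bound_int]
    exact ENNReal.mul_ne_top hC (ENNReal.add_ne_top.2 ⟨hv₀, hv₀⟩)
  · simp_rw [h_bound_int]
    exact ENNReal.Tendsto.const_mul (hv_int.add_const _) (Or.inr hC)

end Lintegral

section NormRpowSMul

variable {E : Type*} [NormedAddCommGroup E] [NormedSpace ℝ E] {s : ℝ}

theorem norm_norm_rpow_smul (hs : s + 1 ≠ 0) (v : E) : ‖‖v‖ ^ s • v‖ = ‖v‖ ^ (s + 1) := by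
  rw [norm_smul, Real.norm_of_nonneg (by positivity), Real.rpow_add_one' (norm_nonneg v) hs]

theorem enorm_norm_rpow_smul (hs : 0 < s + 1) (v : E) : ‖‖v‖ ^ s • v‖ₑ = ‖v‖ₑ ^ (s + 1) := by
  rw [← ofReal_norm, norm_norm_rpow_smul hs.ne',
    ← ENNReal.ofReal_rpow_of_nonneg (norm_nonneg v) hs.le, ofReal_norm]

theorem continuous_norm_rpow_smul (hs : 0 < s + 1) : Continuous fun v : E => ‖v‖ ^ s • v := by
  refine continuous_iff_continuousAt.2 fun v => ?_
  rcases eq_or_ne v 0 with rfl | hv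
  · have h_norm : Continuous fun v : E => ‖v‖ ^ (s + 1) :=
      continuous_norm.rpow_const fun _ => Or.inr hs.le
    rw [ContinuousAt, smul_zero, tendsto_zero_iff_norm_tendsto_zero]
    simpa [norm_norm_rpow_smul hs.ne', Real.zero_rpow hs.ne'] using h_norm.tendsto 0
  · exact (continuous_norm.continuousAt.rpow_const (Or.inl (norm_ne_zero_iff.2 hv))).smul
      continuousAt_id

end NormRpowSMul

theorem stmt1_general {Ω ι : Type*} [MeasurableSpace Ω] {μ : Measure Ω} {l : Filter ι}
    [l.IsCountablyGenerated] {E : Type*} [NormedAddCommGroup E] [NormedSpace ℝ E] {p : ℝ}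
    (hp : 1 < p) {u : ι → Ω → E} {u₀ : Ω → E} (hu : ∀ i, AEStronglyMeasurable (u i) μ)
    (hconv : ∀ᵐ x ∂μ, Tendsto (fun i => u i x) l (𝓝 (u₀ x)))
    (hfin : ∫⁻ x, ‖u₀ x‖ₑ ^ p ∂μ ≠ ∞)
    (hint : Tendsto (fun i => ∫⁻ x, ‖u i x‖ₑ ^ p ∂μ) l (𝓝 (∫⁻ x, ‖u₀ x‖ₑ ^ p ∂μ))) :
    Tendsto (fun i => ∫⁻ x,
        ‖‖u i x‖ ^ (p - 2) • u i x - ‖u₀ x‖ ^ (p - 2) • u₀ x‖ₑ ^ (p / (p - 1)) ∂μ) l (𝓝 0) := by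
  have hp' : 0 < p - 1 := sub_pos.2 hp
  have hs : p - 2 + 1 = p - 1 := by ring
  have h_cont : Continuous fun v : E => ‖v‖ ^ (p - 2) • v :=
    continuous_norm_rpow_smul (hs ▸ hp')
  have h_enorm (v : E) : ‖‖v‖ ^ (p - 2) • v‖ₑ ^ (p / (p - 1)) = ‖v‖ₑ ^ p := by
    rw [enorm_norm_rpow_smul (hs ▸ hp'), hs, ← ENNReal.rpow_mul, mul_div_cancel₀ _ hp'.ne']
  refine tendsto_lintegral_enorm_sub_rpow (by positivity)
    (fun i => h_cont.comp_aestronglyMeasurable (hu i))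
    (hconv.mono fun x hx => (h_cont.tendsto (u₀ x)).comp hx) ?_ ?_
  · simpa only [h_enorm] using hfin
  · simpa only [h_enorm] using hint

/-- Key analytic step of Lemma 2.7 of the paper: if `uₙ → u` a.e. and
`∫ ‖uₙ‖^p → ∫ ‖u‖^p < ∞`, then `|uₙ|^{p-2}uₙ → |u|^{p-2}u` in `L^{p/(p-1)}`.
Here `|v|^{p-2}v` means `‖v‖^(p-2) • v`, which is `0` when `v = 0`. -/
theorem stmt1 {Ω : Type*} [MeasurableSpace Ω] (μ : Measure Ω)
    {E : Type*} [NormedAddCommGroup E] [InnerProductSpace ℝ E]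
    (p : ℝ) (hp : 1 < p)
    (u : ℕ → Ω → E) (u₀ : Ω → E)
    (hu : ∀ n, StronglyMeasurable (u n)) (hu₀ : StronglyMeasurable u₀)
    (hconv : ∀ᵐ x ∂μ, Tendsto (fun n => u n x) atTop (𝓝 (u₀ x)))
    (hfin : ∫⁻ x, (‖u₀ x‖₊ : ℝ≥0∞) ^ p ∂μ ≠ ∞)
    (hint : Tendsto (fun n => ∫⁻ x, (‖u n x‖₊ : ℝ≥0∞) ^ p ∂μ) atTop
      (𝓝 (∫⁻ x, (‖u₀ x‖₊ : ℝ≥0∞) ^ p ∂μ))) :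
    Tendsto (fun n => ∫⁻ x,
        (‖(‖u n x‖ ^ (p - 2) • u n x) - (‖u₀ x‖ ^ (p - 2) • u₀ x)‖₊ : ℝ≥0∞) ^ (p / (p - 1)) ∂μ)
      atTop (𝓝 0) :=
  stmt1_general hp (fun n => (hu n).aestronglyMeasurable) hconv hfin hint
end

section
/- Let E be a separable reflexive real Banach space, E′ a real normed vector space, and T : E → E′ an injective compact continuous linear operator (a compact embedding). Let (x_n^*) be a sequence of continuous linear functionals on E that is total, i.e. if x_n^*(u) = 0 for all n then u = 0. Then, for every C > 0 there exists m₀ ∈ ℕ such that for all m ≥ m₀ and every u ∈ E satisfying ‖T u‖_{E′} = 1 and x_j^*(u) = 0 for all 1 ≤ j ≤ m, one has ‖u‖_E > C. Equivalently, the quantities τ_m := inf{‖u‖_E : u ∈ E, ‖T u‖_{E′} = 1, x_1^*(u) = ⋯ = x_m^*(u) = 0} tend to +∞ as m → ∞. -/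
open Filter Topology

/-!
A compact operator `T` is continuous from the weak to the norm topology on bounded sets, because
the two topologies coincide on norm compact sets. In a reflexive space the set
`{u | ‖u‖ ≤ C ∧ ‖T u‖ = 1}` is therefore weakly compact. The kernels of the functionals are weakly
closed and have no common point in it, so by compactness finitely many of them already have none.
-/

open Metric NormedSpace

theorem continuousOn_of_comp_of_mapsTo_isCompact {X Y Z : Type*} [TopologicalSpace X]
    [TopologicalSpace Y] [TopologicalSpace Z] [T2Space Z] {f : X → Y} {g : Y → Z} {s : Set X}
    {K : Set Y} (hK : IsCompact K) (hg : ContinuousOn g K) (hinj : Set.InjOn g K)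
    (hf : Set.MapsTo f s K) (hgf : ContinuousOn (g ∘ f) s) : ContinuousOn f s := by
  have : CompactSpace K := isCompact_iff_compactSpace.mp hK
  have hemb : IsEmbedding (K.domRestrict g) :=
    (hg.domRestrict.isClosedEmbedding hinj.injective).isEmbedding
  have hrestrict : Continuous (hf.restrict f s K) :=
    hemb.continuous_iff.mpr hgf.domRestrict
  exact continuousOn_iff_continuous_domRestrict.mpr (continuous_subtype_val.comp hrestrict)

theorem isClosed_toWeakSpace_symm_preimage_ker {𝕜 E : Type*} [NontriviallyNormedField 𝕜]
    [AddCommGroup E] [Module 𝕜 E] [TopologicalSpace E] (f : StrongDual 𝕜 E) :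
    IsClosed ((toWeakSpace 𝕜 E).symm ⁻¹' (f.ker : Set E)) :=
  isClosed_singleton.preimage (WeakBilin.eval_continuous (topDualPairing 𝕜 E).flip f)

theorem continuousOn_comp_toWeakSpace_symm_of_isCompactOperator {𝕜 E F : Type*}
    [NontriviallyNormedField 𝕜] [SeminormedAddCommGroup E] [NormedSpace 𝕜 E] [AddCommGroup F]
    [Module 𝕜 F] [TopologicalSpace F] [ContinuousConstSMul 𝕜 F] [SeparatingDual 𝕜 F]
    {T : E →L[𝕜] F} (hT : IsCompactOperator T) {s : Set E} (hs : Bornology.IsBounded s) :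
    ContinuousOn (T ∘ (toWeakSpace 𝕜 E).symm) ((toWeakSpace 𝕜 E).symm ⁻¹' s) := by
  obtain ⟨K, hK, hTK⟩ :=
    IsCompactOperator.image_subset_compact_of_bounded (f := (T : E →ₗ[𝕜] F)) hT hs
  exact continuousOn_of_comp_of_mapsTo_isCompact hK (toWeakSpaceCLM 𝕜 F).continuous.continuousOn
    toWeakSpaceCLM_bijective.injective.injOn (fun _ hw => hTK (Set.mem_image_of_mem T hw))
    (WeakSpace.map T).continuous.continuousOn

section Reflexive

variable {𝕜 E : Type*} [RCLike 𝕜] [NormedAddCommGroup E] [NormedSpace 𝕜 E]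

theorem isCompact_toWeakSpace_symm_preimage_closedBall
    (hrefl : Function.Surjective (inclusionInDoubleDual 𝕜 E)) (x : E) (r : ℝ) :
    IsCompact ((toWeakSpace 𝕜 E).symm ⁻¹' closedBall x r) := by
  have hball : inclusionInDoubleDual 𝕜 E ⁻¹' closedBall (inclusionInDoubleDual 𝕜 E x) r =
      closedBall x r :=
    (inclusionInDoubleDualLi 𝕜).isometry.preimage_closedBall x r
  have hsurj : Function.Surjective (inclusionInDoubleDualWeak 𝕜 E) := hrefl
  rw [← hball]
  exact (isEmbedding_inclusionInDoubleDualWeak 𝕜 E).isInducing.isCompact_preimage'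
    (WeakDual.isCompact_closedBall (inclusionInDoubleDual 𝕜 E x) r) fun φ _ => hsurj φ

theorem isCompact_toWeakSpace_symm_preimage_closedBall_inter_preimage
    {F : Type*} [AddCommGroup F] [Module 𝕜 F] [TopologicalSpace F] [ContinuousConstSMul 𝕜 F]
    [SeparatingDual 𝕜 F] (hrefl : Function.Surjective (inclusionInDoubleDual 𝕜 E))
    {T : E →L[𝕜] F} (hT : IsCompactOperator T) {t : Set F} (ht : IsClosed t) (x : E) (r : ℝ) :
    IsCompact ((toWeakSpace 𝕜 E).symm ⁻¹' (closedBall x r ∩ T ⁻¹' t)) := by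
  have hball := isCompact_toWeakSpace_symm_preimage_closedBall hrefl x r
  have hclosed : IsClosed ((toWeakSpace 𝕜 E).symm ⁻¹' (closedBall x r ∩ T ⁻¹' t)) :=
    (continuousOn_comp_toWeakSpace_symm_of_isCompactOperator hT
      isBounded_closedBall).preimage_isClosed_of_isClosed hball.isClosed ht
  exact hball.of_isClosed_subset hclosed (Set.preimage_mono Set.inter_subset_left)

theorem stmt6_general {F ι : Type*} [NormedAddCommGroup F] [NormedSpace 𝕜 F]
    (hrefl : Function.Surjective (inclusionInDoubleDual 𝕜 E))
    {T : E →L[𝕜] F} (hT : IsCompactOperator T) (f : ι → StrongDual 𝕜 E)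
    (hker : ∀ u : E, (∀ i, f i u = 0) → T u = 0) (C : ℝ) :
    ∃ s : Finset ι, ∀ u : E, ‖T u‖ = 1 → (∀ i ∈ s, f i u = 0) → C < ‖u‖ := by
  have hcompact : IsCompact ((toWeakSpace 𝕜 E).symm ⁻¹' (closedBall 0 C ∩ T ⁻¹' sphere 0 1)) :=
    isCompact_toWeakSpace_symm_preimage_closedBall_inter_preimage hrefl hT isClosed_sphere 0 C
  have hdisjoint : (toWeakSpace 𝕜 E).symm ⁻¹' (closedBall 0 C ∩ T ⁻¹' sphere 0 1) ∩
      ⋂ i, (toWeakSpace 𝕜 E).symm ⁻¹' ((f i).ker : Set E) = ∅ := by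
    refine Set.eq_empty_iff_forall_notMem.mpr fun w ⟨⟨_, hTw⟩, hfw⟩ => ?_
    have hTw_zero : T ((toWeakSpace 𝕜 E).symm w) = 0 := hker _ fun i => Set.mem_iInter.mp hfw i
    simp [hTw_zero] at hTw
  obtain ⟨s, hs⟩ := hcompact.elim_finite_subfamily_closed _
    (fun i => isClosed_toWeakSpace_symm_preimage_ker (f i)) hdisjoint
  refine ⟨s, fun u hTu hfu => lt_of_not_ge fun hu => ?_⟩
  exact Set.eq_empty_iff_forall_notMem.mp hs (toWeakSpace 𝕜 E u)
    ⟨⟨mem_closedBall_zero_iff.mpr hu, mem_sphere_zero_iff_norm.mpr hTu⟩, Set.mem_iInter₂.mpr hfu⟩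

end Reflexive

/-- Lemma 3.12 of the paper: for a compact embedding `T : E → E'` of a separable
reflexive Banach space and a total sequence `(xⱼ*)` of functionals, the quantities
`τ_m = inf{‖u‖ : ‖Tu‖ = 1, x₁*(u) = ⋯ = x_m*(u) = 0}` tend to `+∞`. -/
theorem stmt6 {E : Type*} [NormedAddCommGroup E] [NormedSpace ℝ E] [CompleteSpace E]
    [TopologicalSpace.SeparableSpace E]
    {E' : Type*} [NormedAddCommGroup E'] [NormedSpace ℝ E']
    (hrefl : Function.Surjective (NormedSpace.inclusionInDoubleDual ℝ E))
    (T : E →L[ℝ] E') (hTinj : Function.Injective T) (hTcomp : IsCompactOperator T)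
    (x' : ℕ → E →L[ℝ] ℝ)
    (htotal : ∀ u : E, (∀ n : ℕ, 1 ≤ n → x' n u = 0) → u = 0) :
    ∀ C : ℝ, 0 < C → ∃ m₀ : ℕ, ∀ m : ℕ, m₀ ≤ m →
      ∀ u : E, ‖T u‖ = 1 → (∀ j : ℕ, 1 ≤ j → j ≤ m → x' j u = 0) → C < ‖u‖ := by
  intro C _
  obtain ⟨s, hs⟩ := stmt6_general hrefl hTcomp (fun n : ℕ+ => x' n)
    (fun u hu => by rw [htotal u fun n hn => hu ⟨n, hn⟩, map_zero]) C
  exact ⟨s.sup PNat.val, fun m hm u hTu hu =>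
    hs u hTu fun j hj => hu j j.pos ((Finset.le_sup hj).trans hm)⟩
end

section
/- (Mountain Pass Theorem.) Let E be a real Banach space and I : E → ℝ a C¹ functional (Fréchet differentiable with continuous derivative dI : E → E*) with I(0) ≤ 0. Suppose: (I₁) there exist r > 0 and ρ > 0 such that I(u) ≥ ρ for all u ∈ E with ‖u‖ = r; (I₂) there exists e ∈ E with ‖e‖ > r and I(e) ≤ 0. Set Γ = {γ ∈ C([0,1], E) : γ(0) = 0, γ(1) = e} and c = inf_{γ ∈ Γ} max_{t ∈ [0,1]} I(γ(t)). Then c ≥ ρ and I possesses a (PS)_c sequence, i.e. a sequence (u_n) ⊂ E with I(u_n) → c and ‖dI(u_n)‖_{E*} → 0. Moreover, if I satisfies the (PS)_c condition, then c is a critical value of I, i.e. there exists u ∈ E with dI(u) = 0 and I(u) = c. -/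
open Filter Topology

/-- `I` satisfies the `(PS)_c` condition (w.r.t. the derivative `dI`). -/
def PalaisSmaleC {E : Type*} [NormedAddCommGroup E] [NormedSpace ℝ E]
    (I : E → ℝ) (dI : E → E →L[ℝ] ℝ) (c : ℝ) : Prop :=
  ∀ x : ℕ → E, Tendsto (fun n => I (x n)) atTop (𝓝 c) →
    Tendsto (fun n => ‖dI (x n)‖) atTop (𝓝 0) →
    ∃ (y : E) (φ : ℕ → ℕ), StrictMono φ ∧ Tendsto (fun n => x (φ n)) atTop (𝓝 y)

/-!
The obstacle is that a path whose maximum nearly attains the minimax level `c` need not pass near a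
critical point. Ekeland's variational principle on the complete space of paths with fixed endpoints
replaces it by a path `f` such that no perturbation `g` lowers the maximum by more than
`ε * dist g f`. If `‖dI‖ > ε` held at all the points of `f` where `I` is close to its maximum, then
a continuous field of unit descent directions along `f`, built with a partition of unity and
vanishing at the endpoints, would produce such a perturbation.
-/

/-- The lower set of `x` in the partial order of Ekeland's variational principle: the points `y`
reached from `x` by a decrease of `Φ` of at least `ε` times the distance. -/
def ekelandSet {X : Type*} [PseudoMetricSpace X] (Φ : X → ℝ) (ε : ℝ) (x : X) : Set X :=
  {y | Φ y + ε * dist y x ≤ Φ x}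

section EkelandSet

variable {X : Type*} [PseudoMetricSpace X] {Φ : X → ℝ} {ε δ : ℝ} {x y : X}

theorem self_mem_ekelandSet (Φ : X → ℝ) (ε : ℝ) (x : X) : x ∈ ekelandSet Φ ε x := by
  simp [ekelandSet]

theorem ekelandSet_subset (hε : 0 ≤ ε) (hy : y ∈ ekelandSet Φ ε x) :
    ekelandSet Φ ε y ⊆ ekelandSet Φ ε x := by
  intro z (hz : Φ z + ε * dist z y ≤ Φ y)
  change Φ y + ε * dist y x ≤ Φ x at hy
  calc Φ z + ε * dist z x ≤ Φ z + ε * (dist z y + dist y x) := by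
        gcongr; exact dist_triangle z y x
    _ ≤ Φ x := by linarith

theorem isClosed_ekelandSet (hΦ : LowerSemicontinuous Φ) (ε : ℝ) (x : X) :
    IsClosed (ekelandSet Φ ε x) :=
  (hΦ.add (by fun_prop : Continuous fun y => ε * dist y x).lowerSemicontinuous).isClosed_preimage
    (Φ x)

theorem exists_mem_ekelandSet_forall_dist_le (hb : BddBelow (Set.range Φ)) (hε : 0 < ε)
    (hδ : 0 < δ) (x : X) :
    ∃ y ∈ ekelandSet Φ ε x, ∀ z ∈ ekelandSet Φ ε y, dist z y ≤ δ := by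
  obtain ⟨_, ⟨y, hy, rfl⟩, hlt⟩ :=
    Real.lt_sInf_add_pos (Set.Nonempty.image Φ ⟨x, self_mem_ekelandSet Φ ε x⟩) (mul_pos hε hδ)
  refine ⟨y, hy, fun z hz => ?_⟩
  have hinf : sInf (Φ '' ekelandSet Φ ε x) ≤ Φ z :=
    csInf_le (hb.mono (Set.image_subset_range _ _)) ⟨z, ekelandSet_subset hε.le hy hz, rfl⟩
  change Φ z + ε * dist z y ≤ Φ y at hz
  exact le_of_mul_le_mul_left (by linarith) hε

end EkelandSet

theorem ekeland_variational_principle {X : Type*} [MetricSpace X] [CompleteSpace X] {Φ : X → ℝ}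
    (hΦ : LowerSemicontinuous Φ) (hb : BddBelow (Set.range Φ)) {ε : ℝ} (hε : 0 < ε) (x₀ : X) :
    ∃ x, Φ x + ε * dist x x₀ ≤ Φ x₀ ∧ ∀ y, y ≠ x → Φ x < Φ y + ε * dist y x := by
  choose next hnext hdist using fun n : ℕ =>
    exists_mem_ekelandSet_forall_dist_le hb hε (Nat.one_div_pos_of_nat (α := ℝ) (n := n))
  let u : ℕ → X := fun n => Nat.rec x₀ next n
  have hanti : Antitone fun n => ekelandSet Φ ε (u n) :=
    antitone_nat_of_succ_le fun n => ekelandSet_subset hε.le (hnext n (u n))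
  have hlim : ∀ z, (∀ n, z ∈ ekelandSet Φ ε (u n)) → Tendsto (fun n => u (n + 1)) atTop (𝓝 z) :=
    fun z hz => tendsto_iff_dist_tendsto_zero.2 <| squeeze_zero (fun _ => dist_nonneg)
      (fun n => dist_comm z _ ▸ hdist n (u n) z (hz (n + 1)))
      tendsto_one_div_add_atTop_nhds_zero_nat
  have hmem : ∀ n m, n ≤ m → u m ∈ ekelandSet Φ ε (u n) := fun n m hnm =>
    hanti hnm (self_mem_ekelandSet Φ ε (u m))
  have hcauchy : CauchySeq fun n => u (n + 1) := by
    refine cauchySeq_of_le_tendsto_0' _ (fun n m hnm => ?_) tendsto_one_div_add_atTop_nhds_zero_nat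
    rw [dist_comm]
    exact hdist n (u n) _ (hmem (n + 1) (m + 1) (Nat.succ_le_succ hnm))
  obtain ⟨x, hx⟩ := cauchySeq_tendsto_of_complete hcauchy
  have hxmem : ∀ n, x ∈ ekelandSet Φ ε (u n) := fun n =>
    (isClosed_ekelandSet hΦ ε (u n)).mem_of_tendsto hx
      ((eventually_ge_atTop n).mono fun m hm => hmem n (m + 1) (by lia))
  refine ⟨x, hxmem 0, fun y hyx => ?_⟩
  by_contra! hy
  exact hyx (tendsto_nhds_unique (hlim y fun n => ekelandSet_subset hε.le (hxmem n) hy) hx)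

section MaxAlongMap

variable {K X : Type*} [TopologicalSpace K] [CompactSpace K] [TopologicalSpace X] {I : X → ℝ}

theorem bddAbove_range_comp (hI : Continuous I) (f : C(K, X)) :
    BddAbove (Set.range fun t => I (f t)) :=
  (isCompact_range (hI.comp f.continuous)).bddAbove

theorem lowerSemicontinuous_iSup_comp (hI : Continuous I) :
    LowerSemicontinuous fun f : C(K, X) => ⨆ t, I (f t) :=
  lowerSemicontinuous_ciSup (bddAbove_range_comp hI) fun t =>
    (hI.comp (continuous_eval_const t)).lowerSemicontinuous

end MaxAlongMap

theorem exists_norm_le_one_apply_lt_neg {E : Type*} [NormedAddCommGroup E] [NormedSpace ℝ E]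
    {L : E →L[ℝ] ℝ} {κ : ℝ} (hκ : κ < ‖L‖) : ∃ v, ‖v‖ ≤ 1 ∧ L v < -κ := by
  obtain ⟨x, hx, hLx⟩ := L.exists_lt_apply_of_lt_opNorm hκ
  rw [Real.norm_eq_abs, lt_abs] at hLx
  obtain hpos | hneg := hLx
  · exact ⟨-x, by simpa using hx.le, by simpa using hpos⟩
  · exact ⟨x, hx.le, lt_neg_of_lt_neg hneg⟩

theorem exists_continuous_descent_field {E K : Type*} [NormedAddCommGroup E] [NormedSpace ℝ E]
    [TopologicalSpace K] [NormalSpace K] [ParacompactSpace K] {L : K → E →L[ℝ] ℝ}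
    (hL : Continuous L) {A B : Set K} (hA : IsClosed A) (hB : IsClosed B) (hAB : Disjoint A B)
    {κ : ℝ} (hκ : ∀ t ∈ B, κ < ‖L t‖) :
    ∃ v : C(K, E), (∀ t, ‖v t‖ ≤ 1) ∧ (∀ t ∈ A, v t = 0) ∧ ∀ t ∈ B, L t (v t) < -κ := by
  let T : K → Set E := fun t =>
    Metric.closedBall 0 1 ∩ ({w | t ∈ A → w = 0} ∩ {w | t ∈ B → L t w < -κ})
  have hT : ∀ t, Convex ℝ (T t) := by
    refine fun t => (convex_closedBall 0 1).inter (Convex.inter ?_ ?_)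
    · by_cases ht : t ∈ A <;> simp [ht, convex_univ]
    · by_cases ht : t ∈ B
      · simpa [ht] using convex_halfSpace_lt (L t).isLinear (-κ)
      · simp [ht, convex_univ]
  have hlocal : ∀ t, ∃ w, ∀ᶠ s in 𝓝 t, w ∈ T s := by
    intro t
    by_cases ht : t ∈ B
    · obtain ⟨w, hw, hlt⟩ := exists_norm_le_one_apply_lt_neg (hκ t ht)
      have hLw : Continuous fun s => L s w := by fun_prop
      refine ⟨w, ?_⟩
      filter_upwards [hA.isOpen_compl.mem_nhds (hAB.notMem_of_mem_right ht),
        hLw.continuousAt.eventually_lt_const hlt] with s hsA hs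
      exact ⟨by simpa using hw, fun h => (hsA h).elim, fun _ => hs⟩
    · refine ⟨0, ?_⟩
      filter_upwards [hB.isOpen_compl.mem_nhds ht] with s hsB
      exact ⟨by simp, fun _ => rfl, fun h => (hsB h).elim⟩
  obtain ⟨v, hv⟩ := exists_continuous_forall_mem_convex_of_local_const hT hlocal
  exact ⟨v, fun t => by simpa using (hv t).1, fun t => (hv t).2.1, fun t => (hv t).2.2⟩

section Deformation

variable {E K : Type*} [NormedAddCommGroup E] [NormedSpace ℝ E] [TopologicalSpace K]
  {I : E → ℝ} {dI : E → E →L[ℝ] ℝ} {κ : ℝ}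

theorem continuous_of_hasFDerivAt (hderiv : ∀ x, HasFDerivAt I (dI x) x) : Continuous I :=
  continuous_iff_continuousAt.2 fun x => (hderiv x).continuousAt

theorem apply_add_smul_le_sub_mul (hderiv : ∀ x, HasFDerivAt I (dI x) x) {x v : E} {s : ℝ}
    (hs : 0 ≤ s) (h : ∀ σ ∈ Set.Ioo 0 s, dI (x + σ • v) v ≤ -κ) :
    I (x + s • v) ≤ I x - κ * s := by
  have hline : ∀ σ : ℝ, HasDerivAt (fun σ : ℝ => I (x + σ • v)) (dI (x + σ • v) v) σ := fun σ =>
    (hderiv _).comp_hasDerivAt σ (by simpa using ((hasDerivAt_id σ).smul_const v).const_add x)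
  have hmv := (convex_Icc 0 s).image_sub_le_mul_sub_of_deriv_le (C := -κ)
    (fun σ _ => (hline σ).continuousAt.continuousWithinAt)
    (fun σ _ => (hline σ).differentiableAt.differentiableWithinAt)
    (fun σ hσ => (hline σ).deriv.trans_le (h σ (interior_Icc (α := ℝ) ▸ hσ)))
    0 (Set.left_mem_Icc.2 hs) s (Set.right_mem_Icc.2 hs) hs
  simp only [zero_smul, add_zero, sub_zero] at hmv
  linarith

theorem eventually_forall_mem_apply_add_smul_le (hderiv : ∀ x, HasFDerivAt I (dI x) x)
    (hcont : Continuous dI) (f v : C(K, E)) {B : Set K} (hB : IsCompact B)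
    (hv : ∀ t ∈ B, dI (f t) (v t) < -κ) :
    ∀ᶠ s : ℝ in 𝓝[>] 0, ∀ t ∈ B, I (f t + s • v t) ≤ I (f t) - κ * s := by
  have hslope : Continuous fun p : ℝ × K => dI (f p.2 + p.1 • v p.2) (v p.2) := by fun_prop
  have hnear : ∀ᶠ σ : ℝ in 𝓝 0, ∀ t ∈ B, dI (f t + σ • v t) (v t) < -κ :=
    hB.eventually_forall_of_forall_eventually fun t ht =>
      hslope.continuousAt.eventually_lt_const (by simpa using hv t ht)
  obtain ⟨δ, hδ, hslopeδ⟩ :=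
    (nhdsGT_basis (0 : ℝ)).eventually_iff.1 (hnear.filter_mono nhdsWithin_le_nhds)
  filter_upwards [Ioo_mem_nhdsGT hδ] with s hs t ht
  exact apply_add_smul_le_sub_mul hderiv hs.1.le fun σ hσ =>
    (hslopeδ ⟨hσ.1, hσ.2.trans hs.2⟩ t ht).le

variable [CompactSpace K]

theorem eventually_forall_apply_add_smul_le (hderiv : ∀ x, HasFDerivAt I (dI x) x)
    (hcont : Continuous dI) (f v : C(K, E)) {b m : ℝ} (hbm : b < m) (hm : ∀ t, I (f t) ≤ m)
    (hv : ∀ t, b ≤ I (f t) → dI (f t) (v t) < -κ) :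
    ∀ᶠ s : ℝ in 𝓝[>] 0, ∀ t, I (f t + s • v t) ≤ m - κ * s := by
  have hI : Continuous I := continuous_of_hasFDerivAt hderiv
  have hhigh := eventually_forall_mem_apply_add_smul_le hderiv hcont f v
    (isClosed_le continuous_const (hI.comp f.continuous)).isCompact hv
  have hincr : Continuous fun p : ℝ × K => I (f p.2 + p.1 • v p.2) - I (f p.2) + κ * p.1 := by
    fun_prop
  have hlow : ∀ᶠ s : ℝ in 𝓝 0, ∀ t ∈ Set.univ, I (f t + s • v t) - I (f t) + κ * s < m - b :=
    isCompact_univ.eventually_forall_of_forall_eventually fun t _ =>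
      hincr.continuousAt.eventually_lt_const (by simpa using hbm)
  filter_upwards [hhigh, hlow.filter_mono nhdsWithin_le_nhds] with s hs_high hs_low t
  by_cases ht : b ≤ I (f t)
  · linarith [hs_high t ht, hm t]
  · linarith [hs_low t trivial]

theorem exists_eqOn_iSup_add_mul_dist_le [T2Space K] [Nonempty K]
    (hderiv : ∀ x, HasFDerivAt I (dI x) x) (hcont : Continuous dI) (f : C(K, E)) {A : Set K}
    (hA : IsClosed A) {b : ℝ} (hAb : ∀ t ∈ A, I (f t) < b) (hb : b < ⨆ t, I (f t)) (hκ : 0 < κ)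
    (hdI : ∀ t, b ≤ I (f t) → κ < ‖dI (f t)‖) :
    ∃ g : C(K, E), Set.EqOn g f A ∧ g ≠ f ∧ (⨆ t, I (g t)) + κ * dist g f ≤ ⨆ t, I (f t) := by
  have hI : Continuous I := continuous_of_hasFDerivAt hderiv
  obtain ⟨v, hv_norm, hv_zero, hv_descent⟩ := exists_continuous_descent_field
    (hcont.comp f.continuous) hA (isClosed_le continuous_const (hI.comp f.continuous))
    (Set.disjoint_left.2 fun t ht => (hAb t ht).not_ge) hdI
  obtain ⟨s, hdecr, hs : 0 < s⟩ := ((eventually_forall_apply_add_smul_le hderiv hcont f v hb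
    (le_ciSup (bddAbove_range_comp hI f)) hv_descent).and self_mem_nhdsWithin).exists
  have hsup : ⨆ t, I ((f + s • v) t) ≤ (⨆ t, I (f t)) - κ * s := ciSup_le hdecr
  have hdist : dist (f + s • v) f ≤ s := by
    refine (ContinuousMap.dist_le hs.le).2 fun t => ?_
    simpa [dist_eq_norm, norm_smul, abs_of_pos hs] using
      mul_le_of_le_one_right hs.le (hv_norm t)
  refine ⟨f + s • v, fun t ht => by simp [hv_zero t ht], fun heq => ?_, ?_⟩
  · rw [heq] at hsup
    linarith [mul_pos hκ hs]
  · linarith [mul_le_mul_of_nonneg_left hdist hκ.le]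

end Deformation

theorem exists_almost_critical_of_minimax {E K : Type*} [NormedAddCommGroup E] [NormedSpace ℝ E]
    [CompleteSpace E] [TopologicalSpace K] [CompactSpace K] [T2Space K] [Nonempty K]
    {I : E → ℝ} {dI : E → E →L[ℝ] ℝ} (hderiv : ∀ x, HasFDerivAt I (dI x) x)
    (hcont : Continuous dI) {f₀ : C(K, E)} {A : Set K} (hA : IsClosed A) {a c ε : ℝ}
    (ha : ∀ t ∈ A, I (f₀ t) ≤ a) (hac : a < c)
    (hc : ∀ f : C(K, E), Set.EqOn f f₀ A → c ≤ ⨆ t, I (f t)) (hε : 0 < ε)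
    (hf₀ : ⨆ t, I (f₀ t) ≤ c + ε) :
    ∃ u, |I u - c| ≤ ε ∧ ‖dI u‖ ≤ ε := by
  have hI : Continuous I := continuous_of_hasFDerivAt hderiv
  let S : Set C(K, E) := {f | Set.EqOn f f₀ A}
  have hS : IsClosed S := by
    simp only [S, Set.EqOn, Set.ofPred_forall]
    exact isClosed_biInter fun t _ => isClosed_eq (continuous_eval_const t) continuous_const
  have : CompleteSpace S := hS.completeSpace_coe
  obtain ⟨⟨f, hfS⟩, hff₀, hf⟩ := ekeland_variational_principle (Φ := fun f : S => ⨆ t, I (f.1 t))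
    ((lowerSemicontinuous_iSup_comp hI).comp continuous_subtype_val)
    ⟨c, Set.forall_mem_range.2 fun f => hc f.1 f.2⟩ hε ⟨f₀, Set.eqOn_refl _ _⟩
  have hfc : ⨆ t, I (f t) ≤ c + ε :=
    (le_of_add_le_of_nonneg_left hff₀ (by positivity)).trans hf₀
  obtain ⟨b, hb, hbc⟩ := exists_between (max_lt hac (sub_lt_self c hε))
  obtain ⟨hab, hcb⟩ := max_lt_iff.1 hb
  by_contra! hlarge
  obtain ⟨g, hgf, hne, hg⟩ := exists_eqOn_iSup_add_mul_dist_le hderiv hcont f hA (b := b)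
    (fun t ht => hfS ht ▸ (ha t ht).trans_lt hab) (hbc.trans_le (hc f hfS)) hε
    (fun t ht => hlarge _ (abs_le.2
      ⟨by linarith, by linarith [le_ciSup (bddAbove_range_comp hI f) t]⟩))
  exact (hf ⟨g, hgf.trans hfS⟩ (by simpa using hne)).not_ge hg

section MountainPass

/-- The mountain pass level `c` of `I` between `x` and `y`: the infimum over the paths from `x` to
`y` of the maximum of `I` along the path. -/
noncomputable def mountainPassLevel {X : Type*} [TopologicalSpace X] (I : X → ℝ) (x y : X) : ℝ :=
  ⨅ γ : Path x y, ⨆ t, I (γ t)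

theorem mountainPassLevel_le_iSup {X : Type*} [TopologicalSpace X] {I : X → ℝ} {x y : X}
    (hI : Continuous I) (γ : Path x y) :
    mountainPassLevel I x y ≤ ⨆ t, I (γ t) := by
  refine ciInf_le ⟨I x, Set.forall_mem_range.2 fun γ => ?_⟩ γ
  simpa using le_ciSup (bddAbove_range_comp hI γ.toContinuousMap) 0

/-- `u` is a `(PS)_c` sequence of `I` (w.r.t. the derivative `dI`). -/
def IsPalaisSmaleSeq {E : Type*} [NormedAddCommGroup E] [NormedSpace ℝ E]
    (I : E → ℝ) (dI : E → E →L[ℝ] ℝ) (c : ℝ) (u : ℕ → E) : Prop :=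
  Tendsto (fun n => I (u n)) atTop (𝓝 c) ∧ Tendsto (fun n => ‖dI (u n)‖) atTop (𝓝 0)

variable {E : Type*} [NormedAddCommGroup E] [NormedSpace ℝ E] {I : E → ℝ} {dI : E → E →L[ℝ] ℝ}
  {x y : E}

theorem le_mountainPassLevel_of_forall_norm_eq (hI : Continuous I) {r ρ : ℝ} (hx : ‖x‖ ≤ r)
    (hy : r ≤ ‖y‖) (hρ : ∀ u, ‖u‖ = r → ρ ≤ I u) : ρ ≤ mountainPassLevel I x y := by
  have : Nonempty (Path x y) := PathConnectedSpace.joined x y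
  refine le_ciInf fun γ => ?_
  obtain ⟨t, ht⟩ : ∃ t, ‖γ t‖ = r :=
    mem_range_of_exists_le_of_exists_ge γ.continuous.norm ⟨0, by simpa using hx⟩
      ⟨1, by simpa using hy⟩
  exact (hρ _ ht).trans (le_ciSup (bddAbove_range_comp hI γ.toContinuousMap) t)

theorem exists_almost_critical_of_lt_mountainPassLevel [CompleteSpace E]
    (hderiv : ∀ x, HasFDerivAt I (dI x) x) (hcont : Continuous dI)
    (hx : I x < mountainPassLevel I x y) (hy : I y < mountainPassLevel I x y) {ε : ℝ}
    (hε : 0 < ε) : ∃ u, |I u - mountainPassLevel I x y| ≤ ε ∧ ‖dI u‖ ≤ ε := by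
  have hI : Continuous I := continuous_of_hasFDerivAt hderiv
  have : Nonempty (Path x y) := PathConnectedSpace.joined x y
  obtain ⟨γ, hγ⟩ : ∃ γ : Path x y, ⨆ t, I (γ t) < mountainPassLevel I x y + ε :=
    exists_lt_of_ciInf_lt (lt_add_of_pos_right _ hε)
  refine exists_almost_critical_of_minimax hderiv hcont (f₀ := γ.toContinuousMap)
    (Set.toFinite {0, 1}).isClosed (a := max (I x) (I y)) (by simp) (max_lt hx hy)
    (fun f hf => ?_) hε hγ.le
  have h0 : f 0 = x := by simpa using hf (Set.mem_insert 0 _)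
  have h1 : f 1 = y := by simpa using hf (Set.mem_insert_of_mem 0 rfl)
  exact mountainPassLevel_le_iSup hI ⟨f, h0, h1⟩

theorem exists_isPalaisSmaleSeq_of_forall_pos {c : ℝ}
    (h : ∀ ε > 0, ∃ u, |I u - c| ≤ ε ∧ ‖dI u‖ ≤ ε) : ∃ u, IsPalaisSmaleSeq I dI c u := by
  choose u hIu hdIu using fun n : ℕ => h _ (Nat.one_div_pos_of_nat (α := ℝ) (n := n))
  have hlim := tendsto_one_div_add_atTop_nhds_zero_nat (𝕜 := ℝ)
  exact ⟨u, tendsto_iff_dist_tendsto_zero.2 (squeeze_zero (fun _ => dist_nonneg) hIu hlim),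
    squeeze_zero (fun _ => norm_nonneg _) hdIu hlim⟩

theorem PalaisSmaleC.exists_criticalPoint {c : ℝ} (hPS : PalaisSmaleC I dI c)
    (hI : Continuous I) (hcont : Continuous dI) {u : ℕ → E} (hu : IsPalaisSmaleSeq I dI c u) :
    ∃ x, dI x = 0 ∧ I x = c := by
  obtain ⟨x, φ, hφ, hx⟩ := hPS u hu.1 hu.2
  refine ⟨x, norm_eq_zero.1 ?_, ?_⟩
  · exact tendsto_nhds_unique ((hcont.norm.tendsto x).comp hx) (hu.2.comp hφ.tendsto_atTop)
  · exact tendsto_nhds_unique ((hI.tendsto x).comp hx) (hu.1.comp hφ.tendsto_atTop)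

end MountainPass

/-- Mountain Pass Theorem (Theorem 3.4 of the paper).  With
`c = inf_{γ} max_{t ∈ [0,1]} I(γ(t))` over paths `γ` from `0` to `e`,
one has `c ≥ ρ`, `I` has a `(PS)_c` sequence, and if `I` satisfies the `(PS)_c`
condition then `c` is a critical value. -/
theorem stmt8 {E : Type*} [NormedAddCommGroup E] [NormedSpace ℝ E] [CompleteSpace E]
    (I : E → ℝ) (dI : E → E →L[ℝ] ℝ)
    (hderiv : ∀ x, HasFDerivAt I (dI x) x) (hcont : Continuous dI)
    (hI0 : I 0 ≤ 0)
    (r ρ : ℝ) (hr : 0 < r) (hρ : 0 < ρ)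
    (hI1 : ∀ u : E, ‖u‖ = r → ρ ≤ I u)
    (e : E) (he : r < ‖e‖) (hIe : I e ≤ 0) :
    ρ ≤ (⨅ γ : Path (0 : E) e, ⨆ t : unitInterval, I (γ t)) ∧
    (∃ u : ℕ → E,
      Tendsto (fun n => I (u n)) atTop
        (𝓝 (⨅ γ : Path (0 : E) e, ⨆ t : unitInterval, I (γ t))) ∧
      Tendsto (fun n => ‖dI (u n)‖) atTop (𝓝 0)) ∧
    (PalaisSmaleC I dI (⨅ γ : Path (0 : E) e, ⨆ t : unitInterval, I (γ t)) →
      ∃ u : E, dI u = 0 ∧ I u = ⨅ γ : Path (0 : E) e, ⨆ t : unitInterval, I (γ t)) := by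
  have hI : Continuous I := continuous_of_hasFDerivAt hderiv
  have hlevel : ρ ≤ mountainPassLevel I 0 e :=
    le_mountainPassLevel_of_forall_norm_eq hI (by simpa using hr.le) he.le hI1
  obtain ⟨u, hu⟩ : ∃ u, IsPalaisSmaleSeq I dI (mountainPassLevel I 0 e) u :=
    exists_isPalaisSmaleSeq_of_forall_pos fun _ hε =>
      exists_almost_critical_of_lt_mountainPassLevel hderiv hcont
        (hI0.trans_lt (hρ.trans_le hlevel)) (hIe.trans_lt (hρ.trans_le hlevel)) hε
  exact ⟨hlevel, ⟨u, hu⟩, fun hPS => hPS.exists_criticalPoint hI hcont hu⟩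
end
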